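/- Let r ≥ 1 and let p ∈ E_r satisfy: there exist constants σ > 0 and C > 0 such that for all x ∈ B_σ, Σ_{j∈I_{x,p}} λ_{p,j}(x) ≤ C (M_p(x) + |∇p(x)|²). Then no nonzero q ∈ L_{p,0} has a local minimum point in ℝⁿ. -/

import Mathlib

/-!
The blow-ups `f_j(x) = τ_j p(y_j + h_j x)` satisfy `λ⁺(f_j) ≤ C (λ⁻(f_j) + τ_j⁻¹ |∇f_j|²)` on
larger and larger balls, where `λ⁺` and `λ⁻` are the sums of the positive eigenvalues of the
Hessian and of the absolute values of the negative ones. Since `f_j → q` up to additive constants,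
with all derivatives, and `τ_j → ∞`, the limit obeys the elliptic inequality `λ⁺(q) ≤ C λ⁻(q)`.
Such functions satisfy Hopf's strong minimum principle: if `q` touched a multiple of a sharply
peaked Gaussian from above away from its centre, the large radial second derivative of the Gaussian
would force `λ⁺ > C λ⁻` there. Hence `q` is constant near a local minimum, and therefore everywhere.
-/

open MeasureTheory Filter Topology Metric

noncomputable section

/-- Euclidean space ℝⁿ. -/
abbrev En (n : ℕ) := EuclideanSpace ℝ (Fin n)

/-- First-order partial derivative in direction `i`, as an endomorphism of functions. -/
noncomputable def pd1 (n : ℕ) (i : Fin n) : Function.End (En n → ℝ) :=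
  fun f x => fderiv ℝ f x (EuclideanSpace.single i 1)

/-- Order `|α|` of a multi-index. -/
def mdeg {n : ℕ} (α : Fin n → ℕ) : ℕ := ∑ i, α i

/-- Iterated partial derivative `∂^α`. -/
noncomputable def pdm (n : ℕ) (α : Fin n → ℕ) (f : En n → ℝ) : En n → ℝ :=
  ((List.ofFn fun i : Fin n => (pd1 n i) ^ (α i)).prod) f

/-- The finite set of multi-indices `lo ≤ |α| ≤ k`. -/
def midx (n k lo : ℕ) : Finset (Fin n → ℕ) :=
  (Finset.Iic fun _ => k).filter fun α => lo ≤ mdeg α ∧ mdeg α ≤ k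

/-- `f̃(x) = Σ_{1≤|α|≤k} |∂^α V(x)|^{1/|α|}`. -/
noncomputable def ftil (n k : ℕ) (V : En n → ℝ) (x : En n) : ℝ :=
  ∑ α ∈ midx n k 1, |pdm n α V x| ^ ((1 : ℝ) / (mdeg α))

/-- `f̃_τ(x) = Σ_{1≤|α|≤k} τ^{1/|α|} |∂^α V(x)|^{1/|α|}`. -/
noncomputable def ftilTau (n k : ℕ) (V : En n → ℝ) (τ : ℝ) (x : En n) : ℝ :=
  ∑ α ∈ midx n k 1, τ ^ ((1 : ℝ) / (mdeg α)) * |pdm n α V x| ^ ((1 : ℝ) / (mdeg α))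

/-- Regularized weight `f(x) = Σ_{1≤|α|≤k} (1 + |∂^α V(x)|²)^{1/(2|α|)}`. -/
noncomputable def freg (n k : ℕ) (V : En n → ℝ) (x : En n) : ℝ :=
  ∑ α ∈ midx n k 1, (1 + |pdm n α V x| ^ 2) ^ ((1 : ℝ) / (2 * mdeg α))

/-- The Hessian matrix `(∂_i ∂_j ρ)(x)`. -/
noncomputable def hessM (n : ℕ) (ρ : En n → ℝ) (x : En n) : Matrix (Fin n) (Fin n) ℝ :=
  fun i j => pd1 n i (pd1 n j ρ) x

/-- Eigenvalues of the Hessian matrix (with value 0 in the degenerate non-symmetric case). -/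
noncomputable def hessEig (n : ℕ) (ρ : En n → ℝ) (x : En n) : Fin n → ℝ :=
  if h : (hessM n ρ x).IsHermitian then h.eigenvalues else 0

/-- `Σ_{j ∈ I_{x,ρ}} λ_{ρ,j}(x)`, the sum of the positive eigenvalues of the Hessian. -/
noncomputable def lamPos (n : ℕ) (ρ : En n → ℝ) (x : En n) : ℝ :=
  ∑ j, max (hessEig n ρ x j) 0

/-- `M_ρ(x) = Σ_j max{−λ_{ρ,j}(x), 0}`. -/
noncomputable def lamNeg (n : ℕ) (ρ : En n → ℝ) (x : En n) : ℝ :=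
  ∑ j, max (-(hessEig n ρ x j)) 0

/-- Assumption (i)–(iii) of the paper. -/
def AssumptionA (n k : ℕ) (V : En n → ℝ) : Prop :=
  (∃ C₀ > (1 : ℝ), ∃ δ₁ ∈ Set.Ioo (0 : ℝ) 1, ∀ x : En n,
      lamPos n V x ≤ C₀ * (lamNeg n V x + ‖gradient V x‖ ^ 2
        + (∑ α ∈ midx n k 2, |pdm n α V x| ^ ((2 - δ₁) / (mdeg α))) + 1)) ∧
  (∃ δ₂ ∈ Set.Ioo (0 : ℝ) 1, ∀ α : Fin n → ℕ, mdeg α = k + 1 →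
      ∃ Cα > (0 : ℝ), ∀ x : En n,
        |pdm n α V x| ≤ Cα * (1 + ftil n k V x) ^ ((k : ℝ) + 1 - δ₂)) ∧
  (∀ M : ℝ, ∃ R : ℝ, ∀ x : En n, R ≤ ‖x‖ → M ≤ ftil n k V x)

/-- The Witten-Laplacian quadratic form `Q_{τV}(u) = ∫ |∇u + τ u ∇V|²`. -/
noncomputable def Qform (n : ℕ) (V : En n → ℝ) (τ : ℝ) (u : En n → ℝ) : ℝ :=
  ∫ x : En n, ‖gradient u x + (τ * u x) • gradient V x‖ ^ 2

/-- `u ∈ C_c^∞(ℝⁿ; ℝ)`. -/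
def TestFun (n : ℕ) (u : En n → ℝ) : Prop :=
  ContDiff ℝ (⊤ : ℕ∞) u ∧ HasCompactSupport u

/-- `p` is (given by) a real polynomial of total degree at most `r`. -/
def IsPolyDeg (n r : ℕ) (p : En n → ℝ) : Prop :=
  ∃ P : MvPolynomial (Fin n) ℝ, P.totalDegree ≤ r ∧
    ∀ x : En n, p x = MvPolynomial.eval (fun i => x i) P

/-- `q ∈ L_{p,0}` (limiting polynomials of `p` at `0` of degree at most `r`). -/
def memL (n r : ℕ) (p q : En n → ℝ) : Prop :=
  IsPolyDeg n r q ∧ q 0 = 0 ∧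
  ∃ y : ℕ → En n, ∃ τ h : ℕ → ℝ,
    Tendsto y atTop (nhds 0) ∧ (∀ j, 0 < τ j) ∧ (∀ j, 0 < h j) ∧
    Tendsto τ atTop atTop ∧ Tendsto h atTop (nhds 0) ∧
    ∀ α : Fin n → ℕ, 1 ≤ mdeg α → mdeg α ≤ r →
      Tendsto (fun j => τ j * h j ^ (mdeg α) * pdm n α p (y j)) atTop
        (nhds (pdm n α q 0))

section TraceFunctions

open Matrix

variable {ι : Type*} [Fintype ι]

theorem abs_dotProduct_mulVec_le (A : Matrix ι ι ℝ) {u : EuclideanSpace ℝ ι} (hu : ‖u‖ = 1) :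
    |u.ofLp ⬝ᵥ A *ᵥ u.ofLp| ≤ ∑ i, ∑ j, |A i j| := by
  have hcoord (i : ι) : |u.ofLp i| ≤ 1 := hu ▸ PiLp.norm_apply_le u i
  simp only [dotProduct, mulVec, Finset.mul_sum]
  refine (Finset.abs_sum_le_sum_abs _ _).trans (Finset.sum_le_sum fun i _ => ?_)
  refine (Finset.abs_sum_le_sum_abs _ _).trans (Finset.sum_le_sum fun j _ => ?_)
  calc |u.ofLp i * (A i j * u.ofLp j)| = |u.ofLp i| * |u.ofLp j| * |A i j| := by
        rw [abs_mul, abs_mul]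
        ring
    _ ≤ 1 * 1 * |A i j| := by gcongr <;> exact hcoord _
    _ = |A i j| := by ring

variable [DecidableEq ι] {A B : Matrix ι ι ℝ} {φ : ℝ → ℝ}

theorem trace_cfc_eq_sum_eigenvalues (hA : A.IsHermitian) (φ : ℝ → ℝ) :
    (cfc φ A).trace = ∑ i, φ (hA.eigenvalues i) := by
  rw [hA.cfc_eq, IsHermitian.cfc, Unitary.conjStarAlgAut_apply, trace_mul_cycle]
  simp [Matrix.trace]

theorem trace_cfc_smul_of_posHomogeneous (hA : A.IsHermitian) (hcont : Continuous φ) {c : ℝ}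
    (hφ : ∀ t, φ (c * t) = c * φ t) : (cfc φ (c • A)).trace = c * (cfc φ A).trace := by
  rw [← cfc_comp_const_mul c φ A hcont.continuousOn hA.isSelfAdjoint, funext hφ,
    cfc_const_mul c φ A hcont.continuousOn, trace_smul, smul_eq_mul]

theorem eigenvalues_eq_dotProduct_mulVec (hA : A.IsHermitian) (l : ι) :
    hA.eigenvalues l
      = (hA.eigenvectorBasis l).ofLp ⬝ᵥ A *ᵥ (hA.eigenvectorBasis l).ofLp := by
  simpa using hA.eigenvalues_eq l

theorem dotProduct_mulVec_eq_sum_eigenvalues (hA : A.IsHermitian) (u : EuclideanSpace ℝ ι) :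
    u.ofLp ⬝ᵥ A *ᵥ u.ofLp
      = ∑ l, inner ℝ (hA.eigenvectorBasis l) u ^ 2 * hA.eigenvalues l := by
  have hdot (v w : EuclideanSpace ℝ ι) : v.ofLp ⬝ᵥ w.ofLp = inner ℝ v w := by
    rw [EuclideanSpace.inner_eq_star_dotProduct, star_trivial, dotProduct_comm]
  have hcoord (l : ι) : inner ℝ (hA.eigenvectorBasis l) (WithLp.toLp 2 (A *ᵥ u.ofLp))
      = hA.eigenvalues l * inner ℝ (hA.eigenvectorBasis l) u := by
    rw [← hdot, ← hdot, dotProduct_mulVec, ← mulVec_transpose,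
      ← conjTranspose_eq_transpose_of_trivial, hA.eq, hA.mulVec_eigenvectorBasis,
      smul_dotProduct, smul_eq_mul]
  rw [show u.ofLp ⬝ᵥ A *ᵥ u.ofLp = inner ℝ u (WithLp.toLp 2 (A *ᵥ u.ofLp)) from
    hdot u (WithLp.toLp 2 _), ← hA.eigenvectorBasis.sum_inner_mul_inner]
  refine Finset.sum_congr rfl fun l _ => ?_
  rw [hcoord, real_inner_comm]
  ring

/-- Peierls' inequality. -/
theorem sum_map_dotProduct_mulVec_le_trace_cfc {κ : Type*} [Fintype κ] (hA : A.IsHermitian)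
    (hφ : ConvexOn ℝ Set.univ φ) (b : OrthonormalBasis κ ℝ (EuclideanSpace ℝ ι)) :
    ∑ k, φ ((b k).ofLp ⬝ᵥ A *ᵥ (b k).ofLp) ≤ (cfc φ A).trace := by
  set e := hA.eigenvectorBasis
  have hjensen (k : κ) : φ ((b k).ofLp ⬝ᵥ A *ᵥ (b k).ofLp)
      ≤ ∑ l, inner ℝ (e l) (b k) ^ 2 * φ (hA.eigenvalues l) := by
    rw [dotProduct_mulVec_eq_sum_eigenvalues hA]
    refine hφ.map_sum_le (fun l _ => sq_nonneg _) ?_ fun l _ => Set.mem_univ _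
    rw [e.sum_sq_inner_right, b.norm_eq_one, one_pow]
  calc ∑ k, φ ((b k).ofLp ⬝ᵥ A *ᵥ (b k).ofLp)
      ≤ ∑ k, ∑ l, inner ℝ (e l) (b k) ^ 2 * φ (hA.eigenvalues l) :=
        Finset.sum_le_sum fun k _ => hjensen k
    _ = ∑ l, (∑ k, inner ℝ (e l) (b k) ^ 2) * φ (hA.eigenvalues l) := by
        rw [Finset.sum_comm]
        simp only [Finset.sum_mul]
    _ = (cfc φ A).trace := by
        simp only [b.sum_sq_inner_left, e.norm_eq_one, one_pow, one_mul,
          trace_cfc_eq_sum_eigenvalues hA]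

theorem trace_cfc_le_add (hA : A.IsHermitian) (hB : B.IsHermitian)
    (hφ : ConvexOn ℝ Set.univ φ) {K : NNReal} (hK : LipschitzWith K φ) :
    (cfc φ A).trace ≤ (cfc φ B).trace + Fintype.card ι * (K * ∑ i, ∑ j, |A i j - B i j|) := by
  set e := hA.eigenvectorBasis
  have hterm (l : ι) : φ (hA.eigenvalues l)
      ≤ φ ((e l).ofLp ⬝ᵥ B *ᵥ (e l).ofLp) + K * ∑ i, ∑ j, |A i j - B i j| := by
    have hlip := (le_abs_self _).trans
      (hK.dist_le_mul (hA.eigenvalues l) ((e l).ofLp ⬝ᵥ B *ᵥ (e l).ofLp))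
    have hquad := abs_dotProduct_mulVec_le (A - B) (e.norm_eq_one l)
    rw [sub_mulVec, dotProduct_sub, ← eigenvalues_eq_dotProduct_mulVec] at hquad
    rw [Real.dist_eq] at hlip
    simp only [Matrix.sub_apply] at hquad
    have hKquad := mul_le_mul_of_nonneg_left hquad K.coe_nonneg
    linarith
  calc (cfc φ A).trace = ∑ l, φ (hA.eigenvalues l) := trace_cfc_eq_sum_eigenvalues hA φ
    _ ≤ ∑ l, (φ ((e l).ofLp ⬝ᵥ B *ᵥ (e l).ofLp) + K * ∑ i, ∑ j, |A i j - B i j|) :=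
        Finset.sum_le_sum fun l _ => hterm l
    _ = ∑ l, φ ((e l).ofLp ⬝ᵥ B *ᵥ (e l).ofLp)
          + Fintype.card ι * (K * ∑ i, ∑ j, |A i j - B i j|) := by
        rw [Finset.sum_add_distrib, Finset.sum_const, Finset.card_univ, nsmul_eq_mul]
    _ ≤ (cfc φ B).trace + Fintype.card ι * (K * ∑ i, ∑ j, |A i j - B i j|) := by
        gcongr
        exact sum_map_dotProduct_mulVec_le_trace_cfc hB hφ e

theorem tendsto_trace_cfc {α : Type*} {l : Filter α} {M : α → Matrix ι ι ℝ}
    (hM : ∀ᶠ a in l, (M a).IsHermitian) (hA : A.IsHermitian) (hφ : ConvexOn ℝ Set.univ φ)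
    {K : NNReal} (hK : LipschitzWith K φ) (hlim : Tendsto M l (𝓝 A)) :
    Tendsto (fun a => (cfc φ (M a)).trace) l (𝓝 (cfc φ A).trace) := by
  rw [tendsto_iff_dist_tendsto_zero]
  have hbound : Tendsto (fun a => Fintype.card ι * (K * ∑ i, ∑ j, |M a i j - A i j|)) l (𝓝 0) := by
    have hentry (i j : ι) : Tendsto (fun a => |M a i j - A i j|) l (𝓝 0) := by
      simpa using ((hlim.apply_nhds i).apply_nhds j |>.sub_const (A i j)).abs
    simpa using (tendsto_finsetSum _ fun i _ => tendsto_finsetSum _ fun j _ =>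
      hentry i j).const_mul (K : ℝ) |>.const_mul (Fintype.card ι : ℝ)
  refine squeeze_zero' (.of_forall fun _ => dist_nonneg) ?_ hbound
  filter_upwards [hM] with a ha
  rw [Real.dist_eq, abs_sub_le_iff]
  have h₁ := trace_cfc_le_add ha hA hφ hK
  have h₂ := trace_cfc_le_add hA ha hφ hK
  simp only [abs_sub_comm (A _ _)] at h₂
  constructor <;> linarith

theorem sub_le_trace_cfc_posPart (hA : A.IsHermitian) {α β : ℝ} {v : EuclideanSpace ℝ ι}
    (h : ∀ u : EuclideanSpace ℝ ι, α * inner ℝ v u ^ 2 - β * ‖u‖ ^ 2 ≤ u.ofLp ⬝ᵥ A *ᵥ u.ofLp) :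
    α * ‖v‖ ^ 2 - Fintype.card ι * β ≤ (cfc (fun t : ℝ => max t 0) A).trace := by
  set e := hA.eigenvectorBasis
  calc α * ‖v‖ ^ 2 - Fintype.card ι * β = ∑ l, (α * inner ℝ v (e l) ^ 2 - β) := by
        rw [Finset.sum_sub_distrib, ← Finset.mul_sum, e.sum_sq_inner_left, Finset.sum_const,
          Finset.card_univ, nsmul_eq_mul]
    _ ≤ ∑ l, max (hA.eigenvalues l) 0 := Finset.sum_le_sum fun l _ => le_max_of_le_left <| by
        simpa [eigenvalues_eq_dotProduct_mulVec, e] using h (e l)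
    _ = (cfc (fun t : ℝ => max t 0) A).trace :=
        (trace_cfc_eq_sum_eigenvalues hA fun t => max t 0).symm

theorem trace_cfc_negPart_le (hA : A.IsHermitian) {β : ℝ} (hβ : 0 ≤ β)
    (h : ∀ u : EuclideanSpace ℝ ι, -(β * ‖u‖ ^ 2) ≤ u.ofLp ⬝ᵥ A *ᵥ u.ofLp) :
    (cfc (fun t : ℝ => max (-t) 0) A).trace ≤ Fintype.card ι * β := by
  rw [trace_cfc_eq_sum_eigenvalues hA, ← nsmul_eq_mul, ← Finset.card_univ]
  refine Finset.sum_le_card_nsmul _ _ _ fun l _ => max_le ?_ hβ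
  simpa [eigenvalues_eq_dotProduct_mulVec, neg_le] using h (hA.eigenvectorBasis l)

theorem convexOn_max_zero : ConvexOn ℝ Set.univ fun t : ℝ => max t 0 :=
  (convexOn_id convex_univ).sup (convexOn_const 0 convex_univ)

theorem convexOn_neg_max_zero : ConvexOn ℝ Set.univ fun t : ℝ => max (-t) 0 :=
  (concaveOn_id convex_univ).neg.sup (convexOn_const 0 convex_univ)

theorem lipschitzWith_max_zero : LipschitzWith 1 fun t : ℝ => max t 0 :=
  LipschitzWith.id.max_const 0

theorem lipschitzWith_neg_max_zero : LipschitzWith 1 fun t : ℝ => max (-t) 0 :=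
  LipschitzWith.id.neg.max_const 0

end TraceFunctions

theorem lamPos_eq_trace_cfc {n : ℕ} {f : En n → ℝ} {x : En n} (hf : (hessM n f x).IsHermitian) :
    lamPos n f x = (cfc (fun t : ℝ => max t 0) (hessM n f x)).trace := by
  simp only [lamPos, hessEig, dif_pos hf, trace_cfc_eq_sum_eigenvalues hf]

theorem lamNeg_eq_trace_cfc {n : ℕ} {f : En n → ℝ} {x : En n} (hf : (hessM n f x).IsHermitian) :
    lamNeg n f x = (cfc (fun t : ℝ => max (-t) 0) (hessM n f x)).trace := by
  simp only [lamNeg, hessEig, dif_pos hf, trace_cfc_eq_sum_eigenvalues hf]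

section SecondDerivative

theorem deriv_deriv_nonneg_of_isLocalMin {f : ℝ → ℝ} {t : ℝ} (hf : ContinuousAt f t)
    (hmin : IsLocalMin f t) : 0 ≤ deriv (deriv f) t := by
  by_contra! hneg
  have hmax : IsLocalMax f t := isLocalMax_of_deriv_deriv_neg hneg hmin.deriv_eq_zero hf
  have hconst : f =ᶠ[𝓝 t] fun _ => f t := by
    filter_upwards [hmin, hmax] with s hle hge using le_antisymm hge hle
  simp [hconst.deriv.deriv_eq] at hneg

variable {E : Type*} [NormedAddCommGroup E] [NormedSpace ℝ E] {f g : E → ℝ} {x : E}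

theorem fderiv_fderiv_nonneg_of_isLocalMin (hf : ContDiffAt ℝ 2 f x) (hmin : IsLocalMin f x)
    (u : E) : 0 ≤ fderiv ℝ (fderiv ℝ f) x u u := by
  set γ : ℝ → E := fun t => x + t • u with hγ
  have hγ₀ : γ 0 = x := by simp [hγ]
  have hderiv (t : ℝ) : HasDerivAt γ u t := by
    simpa [hγ] using (hasDerivAt_id t).smul_const u
  have hcont : ContinuousAt γ 0 := (hderiv 0).continuousAt
  rw [← hγ₀] at hf hmin ⊢
  have hfirst : deriv (f ∘ γ) =ᶠ[𝓝 0] fun t => fderiv ℝ f (γ t) u := by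
    filter_upwards [hcont.eventually (hf.eventually (by simp))] with t ht
    exact ((ht.differentiableAt two_ne_zero).hasFDerivAt.comp_hasDerivAt t (hderiv t)).deriv
  have hsecond : HasDerivAt (fun t => fderiv ℝ f (γ t) u)
      (fderiv ℝ (fderiv ℝ f) (γ 0) u u) 0 := by
    have hD := ((hf.fderiv_right (m := 1) le_rfl).differentiableAt one_ne_zero).hasFDerivAt
    simpa using (hD.comp_hasDerivAt 0 (hderiv 0)).clm_apply (hasDerivAt_const 0 u)
  rw [← hsecond.deriv, ← hfirst.deriv_eq]
  exact deriv_deriv_nonneg_of_isLocalMin (hf.continuousAt.comp hcont) (hmin.comp_continuous hcont)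

theorem fderiv_fderiv_le_of_isLocalMin_sub (hf : ContDiffAt ℝ 2 f x) (hg : ContDiffAt ℝ 2 g x)
    (hmin : IsLocalMin (f - g) x) (u : E) :
    fderiv ℝ (fderiv ℝ g) x u u ≤ fderiv ℝ (fderiv ℝ f) x u u := by
  have hfirst : fderiv ℝ (f - g) =ᶠ[𝓝 x] fderiv ℝ f - fderiv ℝ g := by
    filter_upwards [hf.eventually (by simp), hg.eventually (by simp)] with y hfy hgy
    exact fderiv_sub (hfy.differentiableAt two_ne_zero) (hgy.differentiableAt two_ne_zero)
  have hsecond : 0 ≤ fderiv ℝ (fderiv ℝ (f - g)) x u u :=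
    fderiv_fderiv_nonneg_of_isLocalMin (hf.sub hg) hmin u
  rw [hfirst.fderiv_eq,
    fderiv_sub ((hf.fderiv_right (m := 1) le_rfl).differentiableAt one_ne_zero)
      ((hg.fderiv_right (m := 1) le_rfl).differentiableAt one_ne_zero)] at hsecond
  simpa using hsecond

end SecondDerivative

section Hessian

variable {n : ℕ} {f : En n → ℝ} {x : En n}

theorem norm_gradient_sq_eq_sum_pd1 (f : En n → ℝ) (x : En n) :
    ‖gradient f x‖ ^ 2 = ∑ i, pd1 n i f x ^ 2 := by
  rw [EuclideanSpace.real_norm_sq_eq]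
  refine Finset.sum_congr rfl fun i _ => ?_
  rw [pd1, ← inner_gradient_left, EuclideanSpace.inner_single_right]
  simp

theorem hessM_apply_eq_fderiv_fderiv (hf : ContDiffAt ℝ 2 f x) (i j : Fin n) :
    hessM n f x i j
      = fderiv ℝ (fderiv ℝ f) x (EuclideanSpace.single i 1) (EuclideanSpace.single j 1) := by
  have hD := (hf.fderiv_right (m := 1) le_rfl).differentiableAt one_ne_zero
  change fderiv ℝ (fun y => fderiv ℝ f y (EuclideanSpace.single j 1)) x _ = _
  rw [fderiv_clm_apply hD (differentiableAt_const _)]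
  simp

theorem isHermitian_hessM (hf : ContDiffAt ℝ 2 f x) : (hessM n f x).IsHermitian := by
  ext i j
  rw [Matrix.conjTranspose_apply, star_trivial, hessM_apply_eq_fderiv_fderiv hf,
    hessM_apply_eq_fderiv_fderiv hf, hf.isSymmSndFDerivAt (by simp)]

theorem dotProduct_hessM_mulVec (hf : ContDiffAt ℝ 2 f x) (u : En n) :
    u.ofLp ⬝ᵥ (hessM n f x).mulVec u.ofLp = fderiv ℝ (fderiv ℝ f) x u u := by
  conv_rhs => rw [← (EuclideanSpace.basisFun (Fin n) ℝ).sum_repr u]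
  simp only [map_sum, map_smul, EuclideanSpace.basisFun_repr, EuclideanSpace.basisFun_apply,
    sum_apply, smul_apply, ← hessM_apply_eq_fderiv_fderiv hf, dotProduct, Matrix.mulVec,
    smul_eq_mul, Finset.mul_sum]
  rw [Finset.sum_comm]
  exact Finset.sum_congr rfl fun i _ => Finset.sum_congr rfl fun j _ => by ring

end Hessian

section GaussianBarrier

variable {E : Type*} [NormedAddCommGroup E]

/-- The Gaussian of decay rate `a` centred at `y`, serving as the barrier function in Hopf's
argument for the strong minimum principle. -/
def gaussianBarrier (a : ℝ) (y : E) : E → ℝ := fun x => Real.exp (-a * ‖x - y‖ ^ 2)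

theorem gaussianBarrier_pos (a : ℝ) (y x : E) : 0 < gaussianBarrier a y x := Real.exp_pos _

theorem gaussianBarrier_le_one {a : ℝ} (ha : 0 ≤ a) (y x : E) : gaussianBarrier a y x ≤ 1 :=
  Real.exp_le_one_iff.2 <| by
    rw [neg_mul, Left.neg_nonpos_iff]
    positivity

theorem gaussianBarrier_lt_gaussianBarrier {a : ℝ} (ha : 0 < a) {y x z : E}
    (h : ‖x - y‖ < ‖z - y‖) : gaussianBarrier a y z < gaussianBarrier a y x :=
  Real.exp_lt_exp.2 <| by
    rw [neg_mul, neg_mul, neg_lt_neg_iff]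
    gcongr

variable [InnerProductSpace ℝ E]

theorem contDiff_gaussianBarrier (a : ℝ) (y : E) {k : WithTop ℕ∞} :
    ContDiff ℝ k (gaussianBarrier a y) :=
  (contDiff_const.mul ((contDiff_id.sub contDiff_const).norm_sq ℝ)).exp

theorem hasFDerivAt_gaussianBarrier (a : ℝ) (y x : E) :
    HasFDerivAt (gaussianBarrier a y)
      ((-2 * a * gaussianBarrier a y x) • innerSL ℝ (x - y)) x := by
  convert! ((((hasFDerivAt_id x).sub_const y).norm_sq).const_mul (-a)).exp using 1
  ext u
  simp only [gaussianBarrier, map_sub, neg_mul, neg_smul, neg_apply, smul_apply, sub_apply,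
    coe_innerSL_apply, smul_eq_mul, id_eq, ContinuousLinearMap.comp_id, smul_neg, nsmul_eq_mul,
    Nat.cast_ofNat, neg_inj]
  ring

theorem fderiv_fderiv_gaussianBarrier (a : ℝ) (y x u : E) :
    fderiv ℝ (fderiv ℝ (gaussianBarrier a y)) x u u
      = gaussianBarrier a y x * (4 * a ^ 2 * inner ℝ (x - y) u ^ 2 - 2 * a * ‖u‖ ^ 2) := by
  have hdiff : DifferentiableAt ℝ (fderiv ℝ (gaussianBarrier a y)) x :=
    ((contDiff_gaussianBarrier a y (k := 2)).fderiv_right (m := 1) le_rfl).differentiable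
      one_ne_zero x
  have hfirst : (fun z => fderiv ℝ (gaussianBarrier a y) z u)
      = fun z => -2 * a * (gaussianBarrier a y z * inner ℝ (z - y) u) := by
    funext z
    simp only [(hasFDerivAt_gaussianBarrier a y z).fderiv, smul_apply, innerSL_apply_apply,
      smul_eq_mul, mul_assoc]
  have hsecond : fderiv ℝ (fun z => fderiv ℝ (gaussianBarrier a y) z u) x u
      = fderiv ℝ (fderiv ℝ (gaussianBarrier a y)) x u u := by
    rw [fderiv_clm_apply hdiff (differentiableAt_const u)]
    simp
  have hinner : HasFDerivAt (fun z => inner ℝ (z - y) u) (innerSL ℝ u) x := by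
    convert! (innerSL ℝ u).hasFDerivAt.sub_const (inner ℝ u y) using 2 with _
    rw [innerSL_apply_apply, inner_sub_left, real_inner_comm u, real_inner_comm u]
  rw [← hsecond, hfirst,
    (((hasFDerivAt_gaussianBarrier a y x).fun_mul hinner).const_mul (-2 * a)).fderiv]
  simp only [smul_apply, add_apply, innerSL_apply_apply, real_inner_self_eq_norm_sq, smul_eq_mul]
  ring

theorem exists_isLocalMin_sub_smul_gaussianBarrier [ProperSpace E] {f : E → ℝ} {x₀ y : E} {R : ℝ}
    (hf : ContinuousOn f (closedBall y R)) (hmin : ∀ x ∈ closedBall y R, f x₀ ≤ f x)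
    (hx₀ : x₀ ∈ ball y R) (hy : f x₀ < f y) :
    ∃ μ > (0 : ℝ), ∃ s > (0 : ℝ), ∀ a > (0 : ℝ), ∃ x₁ ∈ ball y R,
      s ≤ ‖x₁ - y‖ ∧ IsLocalMin (f - μ • gaussianBarrier a y) x₁ := by
  have hR : 0 < R := pos_of_mem_ball hx₀
  obtain ⟨μ, hμ, hμy⟩ : ∃ μ > 0, f x₀ + μ < f y :=
    ⟨(f y - f x₀) / 2, by linarith, by linarith⟩
  obtain ⟨s, hs, hnear⟩ : ∃ s > 0, ∀ x, dist x y < s → f x₀ + μ < f x :=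
    eventually_nhds_iff.1 <|
      (hf.continuousAt (closedBall_mem_nhds y hR)).eventually (lt_mem_nhds hμy)
  refine ⟨μ, hμ, s, hs, fun a ha => ?_⟩
  set G := f - μ • gaussianBarrier a y
  obtain ⟨x₁, hx₁, hGmin⟩ := (isCompact_closedBall y R).exists_isMinOn
    (nonempty_closedBall.2 hR.le)
    (hf.sub ((contDiff_gaussianBarrier a y (k := 0)).continuous.const_smul μ).continuousOn)
  have hle : f x₁ - μ * gaussianBarrier a y x₁ ≤ f x₀ - μ * gaussianBarrier a y x₀ :=
    hGmin (ball_subset_closedBall hx₀)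
  have hinterior : x₁ ∈ ball y R := by
    by_contra hout
    have hfar : ‖x₀ - y‖ < ‖x₁ - y‖ :=
      (mem_ball_iff_norm.1 hx₀).trans_le (not_lt.1 (mt mem_ball_iff_norm.2 hout))
    have hbarrier_lt := mul_lt_mul_of_pos_left (gaussianBarrier_lt_gaussianBarrier ha hfar) hμ
    linarith [hmin x₁ hx₁]
  refine ⟨x₁, hinterior, ?_, hGmin.isLocalMin
    (mem_of_superset (isOpen_ball.mem_nhds hinterior) ball_subset_closedBall)⟩
  by_contra! hclose
  have hbig := hnear x₁ (by rwa [dist_eq_norm])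
  have hone := mul_le_mul_of_nonneg_left (gaussianBarrier_le_one ha.le y x₁) hμ.le
  have hpos := mul_pos hμ (gaussianBarrier_pos a y x₀)
  linarith

end GaussianBarrier

section StrongMinimumPrinciple

variable {n : ℕ} {f : En n → ℝ} {C : ℝ}

theorem two_mul_mul_norm_sq_le_of_isLocalMin_sub_smul_gaussianBarrier {x y : En n} {μ a : ℝ}
    (hC : 0 ≤ C) (hf : ContDiffAt ℝ 2 f x) (hell : lamPos n f x ≤ C * lamNeg n f x)
    (hμ : 0 < μ) (ha : 0 < a) (hmin : IsLocalMin (f - μ • gaussianBarrier a y) x) :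
    2 * a * ‖x - y‖ ^ 2 ≤ n * (1 + C) := by
  set W := μ * gaussianBarrier a y x
  have hW : 0 < W := mul_pos hμ (gaussianBarrier_pos a y x)
  have hbarrier : ContDiff ℝ 2 (μ • gaussianBarrier a y) :=
    (contDiff_gaussianBarrier a y).const_smul μ
  have hsmul : fderiv ℝ (fderiv ℝ (μ • gaussianBarrier a y)) x
      = μ • fderiv ℝ (fderiv ℝ (gaussianBarrier a y)) x := by
    rw [fderiv_const_smul_field]
    exact congrFun (fderiv_const_smul_field (f := fderiv ℝ (gaussianBarrier a y)) μ) x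
  have hquad (u : En n) : 4 * a ^ 2 * W * inner ℝ (x - y) u ^ 2 - 2 * a * W * ‖u‖ ^ 2
      ≤ u.ofLp ⬝ᵥ (hessM n f x).mulVec u.ofLp := by
    rw [dotProduct_hessM_mulVec hf]
    refine le_of_eq_of_le ?_
      (fderiv_fderiv_le_of_isLocalMin_sub hf hbarrier.contDiffAt hmin u)
    rw [hsmul, smul_apply, smul_apply, fderiv_fderiv_gaussianBarrier, smul_eq_mul]
    ring
  have hH := isHermitian_hessM hf
  have hpos := sub_le_trace_cfc_posPart hH hquad
  have hneg := trace_cfc_negPart_le hH (β := 2 * a * W) (by positivity) fun u =>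
    le_trans (by linarith [show 0 ≤ 4 * a ^ 2 * W * inner ℝ (x - y) u ^ 2 by positivity]) (hquad u)
  rw [← lamPos_eq_trace_cfc hH, Fintype.card_fin] at hpos
  rw [← lamNeg_eq_trace_cfc hH, Fintype.card_fin] at hneg
  have hCneg := mul_le_mul_of_nonneg_left hneg hC
  refine le_of_mul_le_mul_left ?_ (show 0 < 2 * a * W by positivity)
  linarith

theorem eventuallyEq_const_of_isLocalMin_of_lamPos_le {x₀ : En n} (hC : 0 ≤ C)
    (hf : ContDiffAt ℝ 2 f x₀) (hell : ∀ᶠ x in 𝓝 x₀, lamPos n f x ≤ C * lamNeg n f x)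
    (hmin : IsLocalMin f x₀) : f =ᶠ[𝓝 x₀] fun _ => f x₀ := by
  obtain ⟨R, hR, hball⟩ := eventually_nhds_iff_ball.1
    ((hf.eventually (by simp)).and (hell.and hmin))
  filter_upwards [ball_mem_nhds x₀ (by positivity : 0 < R / 4)] with y hy
  rw [mem_ball] at hy
  have hsub : closedBall y (R / 2) ⊆ ball x₀ R := closedBall_subset_ball' (by linarith)
  by_contra hne
  obtain ⟨μ, hμ, s, hs, htouch⟩ := exists_isLocalMin_sub_smul_gaussianBarrier
    (fun x hx => (hball x (hsub hx)).1.continuousAt.continuousWithinAt)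
    (fun x hx => (hball x (hsub hx)).2.2)
    (mem_ball.2 (by rw [dist_comm]; linarith : dist x₀ y < R / 2))
    (lt_of_le_of_ne (hball y (hsub (mem_closedBall_self (by positivity)))).2.2 (Ne.symm hne))
  obtain ⟨x₁, hx₁, hfar, hx₁min⟩ := htouch ((n * (1 + C) + 1) / (2 * s ^ 2)) (by positivity)
  obtain ⟨hfx₁, hellx₁, -⟩ := hball x₁ (hsub (ball_subset_closedBall hx₁))
  have hupper := two_mul_mul_norm_sq_le_of_isLocalMin_sub_smul_gaussianBarrier hC hfx₁ hellx₁
    hμ (by positivity) hx₁min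
  have hlower : n * (1 + C) + 1 ≤ 2 * ((n * (1 + C) + 1) / (2 * s ^ 2)) * ‖x₁ - y‖ ^ 2 :=
    calc n * (1 + C) + 1 = 2 * ((n * (1 + C) + 1) / (2 * s ^ 2)) * s ^ 2 := by field_simp
      _ ≤ _ := by gcongr
  linarith

end StrongMinimumPrinciple

section PolynomialFunctions

open MvPolynomial

variable {n : ℕ}

/-- The function on Euclidean space defined by a polynomial. -/
def polyFun (P : MvPolynomial (Fin n) ℝ) : En n → ℝ :=
  fun x => eval (fun i => x i) P

theorem polyFun_apply_zero (P : MvPolynomial (Fin n) ℝ) : polyFun P 0 = coeff 0 P :=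
  DFunLike.congr_fun (eval_zero (σ := Fin n) (R := ℝ)) P

theorem hasFDerivAt_polyFun (P : MvPolynomial (Fin n) ℝ) (x : En n) :
    HasFDerivAt (polyFun P)
      (∑ i, polyFun (pderiv i P) x • (EuclideanSpace.proj i : En n →L[ℝ] ℝ)) x := by
  induction P using MvPolynomial.induction_on with
  | C a =>
    have heq : polyFun (C a) = fun _ : En n => a := funext fun x => eval_C a
    simpa [heq, polyFun] using hasFDerivAt_const a x
  | add P Q hP hQ =>
    have heq : polyFun (P + Q) = polyFun P + polyFun Q := funext fun x => map_add _ P Q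
    rw [heq]
    simpa only [polyFun, map_add, add_smul, Finset.sum_add_distrib] using hP.add hQ
  | mul_X P j hP =>
    have hj : HasFDerivAt (fun x : En n => x j) (EuclideanSpace.proj j : En n →L[ℝ] ℝ) x :=
      (EuclideanSpace.proj j : En n →L[ℝ] ℝ).hasFDerivAt
    have heq : polyFun (P * X j) = polyFun P * fun x => x j := funext fun x => by simp [polyFun]
    rw [heq]
    refine (hP.mul hj).congr_fderiv ?_
    simp only [polyFun, pderiv_mul, pderiv_X, map_add, map_mul, eval_X, add_smul,
      Finset.sum_add_distrib, Pi.single_apply, Finset.smul_sum, smul_smul]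
    rw [add_comm]
    congr 1
    · exact Finset.sum_congr rfl fun i _ => by rw [mul_comm]
    · simp [apply_ite, ite_smul]

theorem pd1_polyFun (i : Fin n) (P : MvPolynomial (Fin n) ℝ) :
    pd1 n i (polyFun P) = polyFun (pderiv i P) := by
  funext x
  simp [pd1, (hasFDerivAt_polyFun P x).fderiv]

theorem iterate_pd1_polyFun (i : Fin n) (k : ℕ) (P : MvPolynomial (Fin n) ℝ) :
    (pd1 n i ^ k) (polyFun P) = polyFun (((pderiv i).toLinearMap ^ k) P) := by
  induction k with
  | zero => rfl
  | succ k ih =>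
    rw [pow_succ', pow_succ']
    exact (congrArg (pd1 n i) ih).trans (pd1_polyFun i _)

theorem list_prod_pd1_polyFun (l : List (Fin n)) (α : Fin n → ℕ) (P : MvPolynomial (Fin n) ℝ) :
    (l.map fun i => pd1 n i ^ α i).prod (polyFun P) =
      polyFun ((l.map fun i => (pderiv i).toLinearMap ^ α i).prod P) := by
  induction l with
  | nil => rfl
  | cons i l ih =>
    rw [List.map_cons, List.prod_cons, List.map_cons, List.prod_cons]
    exact (congrArg (pd1 n i ^ α i) ih).trans (iterate_pd1_polyFun i _ _)

end PolynomialFunctions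

section TaylorCoefficients

open MvPolynomial

variable {R σ : Type*} [CommSemiring R]

theorem coeff_iterate_pderiv (i : σ) (k : ℕ) (m : σ →₀ ℕ) (P : MvPolynomial σ R) :
    coeff m (((pderiv i).toLinearMap ^ k) P) =
      (m i + 1).ascFactorial k * coeff (m + Finsupp.single i k) P := by
  induction k generalizing m with
  | zero => simp
  | succ k ih =>
    have hasc : (m i + 1).ascFactorial (k + 1) = (m i + 1 + 1).ascFactorial k * (m i + 1) := by
      rw [mul_comm, Nat.succ_ascFactorial, Nat.ascFactorial_succ]
    rw [pow_succ', Module.End.mul_apply, Derivation.coeFn_coe, coeff_pderiv, ih, hasc, add_assoc,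
      ← Finsupp.single_add, add_comm 1 k]
    simp only [Finsupp.add_apply, Finsupp.single_eq_same]
    push_cast
    ring

theorem coeff_list_prod_iterate_pderiv {l : List σ} (hl : l.Nodup) (α : σ → ℕ) (m : σ →₀ ℕ)
    (P : MvPolynomial σ R) :
    coeff m ((l.map fun i => (pderiv i).toLinearMap ^ α i).prod P) =
      (l.map fun i => ((m i + 1).ascFactorial (α i) : R)).prod *
        coeff (m + (l.map fun i => Finsupp.single i (α i)).sum) P := by
  induction l generalizing m with
  | nil => simp
  | cons i l ih =>
    obtain ⟨hi, hl⟩ := List.nodup_cons.mp hl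
    have hm : ∀ j ∈ l, (m + Finsupp.single i (α i)) j = m j := fun j hj => by
      rw [Finsupp.add_apply, Finsupp.single_eq_of_ne (ne_of_mem_of_not_mem hj hi), add_zero]
    simp only [List.map_cons, List.prod_cons, List.sum_cons, Module.End.mul_apply,
      coeff_iterate_pderiv, ih hl, ← add_assoc, mul_assoc]
    congr 3
    exact List.map_congr_left fun j hj => by rw [hm j hj]

variable {n : ℕ}

theorem pdm_polyFun_zero (α : Fin n →₀ ℕ) (P : MvPolynomial (Fin n) ℝ) :
    pdm n α (polyFun P) 0 = (∏ i, ((α i).factorial : ℝ)) * coeff α P := by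
  have hsum : ((List.finRange n).map fun i => Finsupp.single i (α i)).sum = α := by
    rw [← List.ofFn_eq_map, List.sum_ofFn, Finsupp.univ_sum_single]
  have hprod : ((List.finRange n).map fun i =>
      (((0 : Fin n →₀ ℕ) i + 1).ascFactorial (α i) : ℝ)).prod =
        ∏ i, ((α i).factorial : ℝ) := by
    simp only [Finsupp.coe_zero, Pi.zero_apply, zero_add, Nat.one_ascFactorial]
    rw [← List.ofFn_eq_map, List.prod_ofFn]
  rw [pdm, List.ofFn_eq_map, list_prod_pd1_polyFun, polyFun_apply_zero,
    coeff_list_prod_iterate_pderiv (List.nodup_finRange n), hprod, hsum, zero_add]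

end TaylorCoefficients

section Convergence

open MvPolynomial

theorem totalDegree_pderiv_le {R σ : Type*} [CommSemiring R] (i : σ) (P : MvPolynomial σ R) :
    (pderiv i P).totalDegree ≤ P.totalDegree := by
  refine Finset.sup_le fun m hm => ?_
  have hcoeff : coeff (m + Finsupp.single i 1) P ≠ 0 := fun h => by
    rw [mem_support_iff, coeff_pderiv, h, zero_mul] at hm
    exact hm rfl
  exact (Finsupp.degree_mono le_self_add).trans (le_totalDegree (mem_support_iff.mpr hcoeff))

variable {n r : ℕ} {ι : Type*} {l : Filter ι} {F : ι → MvPolynomial (Fin n) ℝ}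
  {Q : MvPolynomial (Fin n) ℝ}

theorem tendsto_polyFun_of_tendsto_coeff (hF : ∀ j, (F j).totalDegree ≤ r)
    (hQ : Q.totalDegree ≤ r) (h : ∀ m, Tendsto (fun j => coeff m (F j)) l (𝓝 (coeff m Q)))
    (x : En n) : Tendsto (fun j => polyFun (F j) x) l (𝓝 (polyFun Q x)) := by
  have hexpand : ∀ P : MvPolynomial (Fin n) ℝ, P.totalDegree ≤ r → polyFun P x =
      ∑ m ∈ (Finsupp.finite_of_degree_le r).toFinset, coeff m P * ∏ i, x i ^ m i := fun P hP => by
    rw [polyFun, eval_eq']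
    refine Finset.sum_subset (fun m hm => ?_) fun m _ hm => by
      rw [notMem_support_iff.mp hm, zero_mul]
    rw [Set.Finite.mem_toFinset]
    exact (le_totalDegree hm).trans hP
  simp only [hexpand _ (hF _), hexpand Q hQ]
  exact tendsto_finsetSum _ fun m _ => (h m).mul_const _

theorem tendsto_coeff_of_tendsto_pdm_zero (hF : ∀ j, (F j).totalDegree ≤ r)
    (hQ : Q.totalDegree ≤ r)
    (h : ∀ α : Fin n → ℕ, 1 ≤ mdeg α → mdeg α ≤ r →
      Tendsto (fun j => pdm n α (polyFun (F j)) 0) l (𝓝 (pdm n α (polyFun Q) 0)))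
    {m : Fin n →₀ ℕ} (hm : m ≠ 0) :
    Tendsto (fun j => coeff m (F j)) l (𝓝 (coeff m Q)) := by
  have hdeg : m.degree = mdeg m := Finsupp.degree_eq_sum m
  rcases le_or_gt (mdeg m) r with hle | hlt
  · have hfact : (∏ i, ((m i).factorial : ℝ)) ≠ 0 :=
      Finset.prod_ne_zero_iff.mpr fun i _ => Nat.cast_ne_zero.mpr (Nat.factorial_ne_zero _)
    have hpos : 1 ≤ mdeg m := by
      rw [← hdeg]
      exact Nat.one_le_iff_ne_zero.mpr ((Finsupp.degree_eq_zero_iff m).not.mpr hm)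
    have hlim := (h m hpos hle).const_mul (∏ i, ((m i).factorial : ℝ))⁻¹
    simpa only [pdm_polyFun_zero, inv_mul_cancel_left₀ hfact] using hlim
  · have hzero : ∀ P : MvPolynomial (Fin n) ℝ, P.totalDegree ≤ r → coeff m P = 0 := fun P hP =>
      coeff_eq_zero_of_totalDegree_lt (hP.trans_lt (hlt.trans_eq hdeg.symm))
    simp only [hzero _ (hF _), hzero Q hQ]
    exact tendsto_const_nhds

theorem tendsto_coeff_pderiv (h : ∀ m ≠ 0, Tendsto (fun j => coeff m (F j)) l (𝓝 (coeff m Q)))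
    (i : Fin n) (m : Fin n →₀ ℕ) :
    Tendsto (fun j => coeff m (pderiv i (F j))) l (𝓝 (coeff m (pderiv i Q))) := by
  simp only [coeff_pderiv]
  exact (h _ fun hm => by simpa using congrArg (· i) hm).mul_const _

end Convergence

section PolynomialsOfBoundedDegree

open MvPolynomial

theorem totalDegree_bind₁_le_of_totalDegree_le_one {R σ τ : Type*} [CommSemiring R]
    {g : σ → MvPolynomial τ R} (hg : ∀ i, (g i).totalDegree ≤ 1) (P : MvPolynomial σ R) :
    (bind₁ g P).totalDegree ≤ P.totalDegree := by
  rw [bind₁, aeval_def, eval₂_eq]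
  refine totalDegree_finsetSum_le fun m hm => (totalDegree_mul _ _).trans ?_
  rw [algebraMap_eq, totalDegree_C, zero_add]
  refine ((totalDegree_finsetProd _ _).trans (Finset.sum_le_sum fun i _ => ?_)).trans
    (le_totalDegree hm)
  exact (totalDegree_pow _ _).trans (mul_le_of_le_one_right' (hg i))

variable {n r : ℕ} {p : En n → ℝ}

theorem IsPolyDeg.exists_polyFun (hp : IsPolyDeg n r p) :
    ∃ P : MvPolynomial (Fin n) ℝ, P.totalDegree ≤ r ∧ p = polyFun P :=
  hp.imp fun _ hP => ⟨hP.1, funext hP.2⟩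

theorem analyticOnNhd_polyFun (P : MvPolynomial (Fin n) ℝ) :
    AnalyticOnNhd ℝ (polyFun P) Set.univ :=
  AnalyticOnNhd.aeval_mvPolynomial (𝕜 := ℝ) (E := En n) (f := fun x i => x i)
    (fun i => (EuclideanSpace.proj i : En n →L[ℝ] ℝ).analyticOnNhd Set.univ) P

theorem IsPolyDeg.analyticOnNhd (hp : IsPolyDeg n r p) : AnalyticOnNhd ℝ p Set.univ := by
  obtain ⟨P, -, rfl⟩ := hp.exists_polyFun
  exact analyticOnNhd_polyFun P

theorem IsPolyDeg.contDiff (hp : IsPolyDeg n r p) {k : WithTop ℕ∞} : ContDiff ℝ k p :=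
  contDiffOn_univ.mp (hp.analyticOnNhd.contDiffOn uniqueDiffOn_univ)

theorem IsPolyDeg.eq_const_of_eventuallyEq (hp : IsPolyDeg n r p) {x₀ : En n} {c : ℝ}
    (h : p =ᶠ[𝓝 x₀] fun _ => c) : p = fun _ => c :=
  hp.analyticOnNhd.eq_of_eventuallyEq analyticOnNhd_const h

end PolynomialsOfBoundedDegree

section ConvergenceOfDerivatives

open MvPolynomial

variable {n r : ℕ} {ι : Type*} {l : Filter ι} {f : ι → En n → ℝ} {q : En n → ℝ}

theorem tendsto_pd1_of_tendsto_pdm_zero (hf : ∀ j, IsPolyDeg n r (f j)) (hq : IsPolyDeg n r q)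
    (h : ∀ α : Fin n → ℕ, 1 ≤ mdeg α → mdeg α ≤ r →
      Tendsto (fun j => pdm n α (f j) 0) l (𝓝 (pdm n α q 0))) (i : Fin n) (x : En n) :
    Tendsto (fun j => pd1 n i (f j) x) l (𝓝 (pd1 n i q x)) := by
  choose F hF hfF using fun j => (hf j).exists_polyFun
  obtain ⟨Q, hQ, rfl⟩ := hq.exists_polyFun
  obtain rfl : f = fun j => polyFun (F j) := funext hfF
  simp only [pd1_polyFun]
  exact tendsto_polyFun_of_tendsto_coeff (fun j => (totalDegree_pderiv_le i _).trans (hF j))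
    ((totalDegree_pderiv_le i _).trans hQ)
    (tendsto_coeff_pderiv (fun _ => tendsto_coeff_of_tendsto_pdm_zero hF hQ h) i) x

theorem tendsto_hessM_of_tendsto_pdm_zero (hf : ∀ j, IsPolyDeg n r (f j))
    (hq : IsPolyDeg n r q)
    (h : ∀ α : Fin n → ℕ, 1 ≤ mdeg α → mdeg α ≤ r →
      Tendsto (fun j => pdm n α (f j) 0) l (𝓝 (pdm n α q 0))) (x : En n) :
    Tendsto (fun j => hessM n (f j) x) l (𝓝 (hessM n q x)) := by
  choose F hF hfF using fun j => (hf j).exists_polyFun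
  obtain ⟨Q, hQ, rfl⟩ := hq.exists_polyFun
  obtain rfl : f = fun j => polyFun (F j) := funext hfF
  refine tendsto_pi_nhds.mpr fun i => tendsto_pi_nhds.mpr fun k => ?_
  simp only [hessM, pd1_polyFun]
  exact tendsto_polyFun_of_tendsto_coeff
    (fun j => (totalDegree_pderiv_le i _).trans ((totalDegree_pderiv_le k _).trans (hF j)))
    ((totalDegree_pderiv_le i _).trans ((totalDegree_pderiv_le k _).trans hQ))
    (tendsto_coeff_pderiv (fun m _ =>
      tendsto_coeff_pderiv (fun _ => tendsto_coeff_of_tendsto_pdm_zero hF hQ h) k m) i) x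

end ConvergenceOfDerivatives

section Rescaling

open MvPolynomial

variable {n r : ℕ}

/-- The blow-up of `f` at the point `y` with amplitude `τ` and length scale `h`. Limiting
polynomials are limits of blow-ups, up to additive constants. -/
def rescale (τ h : ℝ) (y : En n) (f : En n → ℝ) : En n → ℝ :=
  fun x => τ * f (y + h • x)

variable (τ h : ℝ) (y : En n) (f : En n → ℝ)

theorem pd1_rescale (i : Fin n) : pd1 n i (rescale τ h y f) = rescale (τ * h) h y (pd1 n i f) := by
  funext x
  have hshift : fderiv ℝ (fun z => f (y + z)) (h • x) = fderiv ℝ f (y + h • x) :=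
    fderiv_comp_add_left y
  have hfun : rescale τ h y f = τ • fun z => f (y + h • z) := rfl
  rw [pd1, hfun, fderiv_const_smul_field, Pi.smul_apply,
    fderiv_comp_smul (f := fun z => f (y + z)), hshift]
  simp [pd1, rescale, mul_assoc]

theorem iterate_pd1_rescale (i : Fin n) (k : ℕ) :
    (pd1 n i ^ k) (rescale τ h y f) = rescale (τ * h ^ k) h y ((pd1 n i ^ k) f) := by
  induction k with
  | zero => rw [pow_zero, pow_zero, mul_one]; rfl
  | succ k ih =>
    rw [pow_succ', pow_succ, ← mul_assoc]
    exact (congrArg (pd1 n i) ih).trans (pd1_rescale _ _ _ _ i)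

theorem list_prod_pd1_rescale (l : List (Fin n)) (α : Fin n → ℕ) :
    (l.map fun i => pd1 n i ^ α i).prod (rescale τ h y f) =
      rescale (τ * h ^ (l.map α).sum) h y ((l.map fun i => pd1 n i ^ α i).prod f) := by
  induction l with
  | nil => rw [List.map_nil, List.map_nil, List.sum_nil, pow_zero, mul_one]; rfl
  | cons i l ih =>
    rw [List.map_cons, List.prod_cons, List.map_cons, List.sum_cons, add_comm, pow_add,
      ← mul_assoc]
    exact (congrArg (pd1 n i ^ α i) ih).trans (iterate_pd1_rescale _ _ _ _ i _)

theorem pdm_rescale (α : Fin n → ℕ) :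
    pdm n α (rescale τ h y f) = rescale (τ * h ^ mdeg α) h y (pdm n α f) := by
  have hsum : ((List.finRange n).map α).sum = mdeg α := by
    rw [← List.ofFn_eq_map, List.sum_ofFn, mdeg]
  rw [pdm, List.ofFn_eq_map, list_prod_pd1_rescale, hsum, pdm, List.ofFn_eq_map]

theorem hessM_rescale (x : En n) :
    hessM n (rescale τ h y f) x = (τ * h ^ 2) • hessM n f (y + h • x) := by
  ext i j
  rw [hessM, pd1_rescale, pd1_rescale, mul_assoc, ← sq]
  rfl

theorem norm_gradient_rescale_sq (x : En n) :
    ‖gradient (rescale τ h y f) x‖ ^ 2 = (τ * h) ^ 2 * ‖gradient f (y + h • x)‖ ^ 2 := by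
  simp only [norm_gradient_sq_eq_sum_pd1, pd1_rescale, Finset.mul_sum]
  simp only [rescale, mul_pow]

variable {τ h y f}

theorem isPolyDeg_rescale (hf : IsPolyDeg n r f) : IsPolyDeg n r (rescale τ h y f) := by
  obtain ⟨P, hP, rfl⟩ := hf.exists_polyFun
  set g : Fin n → MvPolynomial (Fin n) ℝ := fun i => h • X i + C (y i)
  have hg : ∀ i, (g i).totalDegree ≤ 1 := fun i =>
    (totalDegree_add _ _).trans (max_le ((totalDegree_smul_le _ _).trans (totalDegree_X i).le)
      ((totalDegree_C _).trans_le zero_le_one))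
  refine ⟨τ • bind₁ g P, ((totalDegree_smul_le _ _).trans
    (totalDegree_bind₁_le_of_totalDegree_le_one hg P)).trans hP, fun x => ?_⟩
  have hg_eval : (fun i => eval (fun k => x k) (g i)) = fun i => (y + h • x) i :=
    funext fun i => by simp [g, add_comm]
  have hbind : eval (fun k => x k) (bind₁ g P) = polyFun P (y + h • x) := by
    rw [polyFun, ← hg_eval]
    exact eval₂Hom_bind₁ _ _ _ _
  rw [smul_eval, hbind, rescale]

theorem contDiff_rescale {k : WithTop ℕ∞} (hf : ContDiff ℝ k f) :
    ContDiff ℝ k (rescale τ h y f) := by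
  unfold rescale
  fun_prop

theorem lamPos_rescale (hτ : 0 ≤ τ) (hf : ContDiff ℝ 2 f) (x : En n) :
    lamPos n (rescale τ h y f) x = τ * h ^ 2 * lamPos n f (y + h • x) := by
  have hH : (hessM n f (y + h • x)).IsHermitian := isHermitian_hessM hf.contDiffAt
  have hc : 0 ≤ τ * h ^ 2 := by positivity
  have hH' : (hessM n (rescale τ h y f) x).IsHermitian :=
    isHermitian_hessM (contDiff_rescale hf).contDiffAt
  rw [lamPos_eq_trace_cfc hH', lamPos_eq_trace_cfc hH, hessM_rescale]
  exact trace_cfc_smul_of_posHomogeneous hH (by fun_prop) fun t => by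
    rw [mul_max_of_nonneg _ _ hc, mul_zero]

theorem lamNeg_rescale (hτ : 0 ≤ τ) (hf : ContDiff ℝ 2 f) (x : En n) :
    lamNeg n (rescale τ h y f) x = τ * h ^ 2 * lamNeg n f (y + h • x) := by
  have hH : (hessM n f (y + h • x)).IsHermitian := isHermitian_hessM hf.contDiffAt
  have hc : 0 ≤ τ * h ^ 2 := by positivity
  have hH' : (hessM n (rescale τ h y f) x).IsHermitian :=
    isHermitian_hessM (contDiff_rescale hf).contDiffAt
  rw [lamNeg_eq_trace_cfc hH', lamNeg_eq_trace_cfc hH, hessM_rescale]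
  exact trace_cfc_smul_of_posHomogeneous hH (by fun_prop) fun t => by
    rw [mul_max_of_nonneg _ _ hc, mul_zero, mul_neg]

theorem lamPos_rescale_le (hτ : 0 < τ) (hf : ContDiff ℝ 2 f) {C : ℝ} {x : En n}
    (hle : lamPos n f (y + h • x) ≤
      C * (lamNeg n f (y + h • x) + ‖gradient f (y + h • x)‖ ^ 2)) :
    lamPos n (rescale τ h y f) x ≤
      C * (lamNeg n (rescale τ h y f) x + τ⁻¹ * ‖gradient (rescale τ h y f) x‖ ^ 2) := by
  rw [lamPos_rescale hτ.le hf, lamNeg_rescale hτ.le hf, norm_gradient_rescale_sq]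
  calc τ * h ^ 2 * lamPos n f (y + h • x)
      ≤ τ * h ^ 2 * (C * (lamNeg n f (y + h • x) + ‖gradient f (y + h • x)‖ ^ 2)) := by gcongr
    _ = C * (τ * h ^ 2 * lamNeg n f (y + h • x) +
          τ⁻¹ * ((τ * h) ^ 2 * ‖gradient f (y + h • x)‖ ^ 2)) := by field_simp

end Rescaling

section LimitingPolynomials

variable {n r : ℕ} {p q : En n → ℝ} {σ C : ℝ}

theorem tendsto_lamPos_of_tendsto_hessM {ι : Type*} {l : Filter ι} {f : ι → En n → ℝ} {x : En n}
    (hf : ∀ j, ContDiff ℝ 2 (f j)) (hq : ContDiff ℝ 2 q)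
    (h : Tendsto (fun j => hessM n (f j) x) l (𝓝 (hessM n q x))) :
    Tendsto (fun j => lamPos n (f j) x) l (𝓝 (lamPos n q x)) := by
  have hH := fun j => isHermitian_hessM (x := x) (hf j).contDiffAt
  have hHq := isHermitian_hessM (x := x) hq.contDiffAt
  simp only [lamPos_eq_trace_cfc (hH _), lamPos_eq_trace_cfc hHq]
  exact tendsto_trace_cfc (.of_forall hH) hHq convexOn_max_zero lipschitzWith_max_zero h

theorem tendsto_lamNeg_of_tendsto_hessM {ι : Type*} {l : Filter ι} {f : ι → En n → ℝ} {x : En n}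
    (hf : ∀ j, ContDiff ℝ 2 (f j)) (hq : ContDiff ℝ 2 q)
    (h : Tendsto (fun j => hessM n (f j) x) l (𝓝 (hessM n q x))) :
    Tendsto (fun j => lamNeg n (f j) x) l (𝓝 (lamNeg n q x)) := by
  have hH := fun j => isHermitian_hessM (x := x) (hf j).contDiffAt
  have hHq := isHermitian_hessM (x := x) hq.contDiffAt
  simp only [lamNeg_eq_trace_cfc (hH _), lamNeg_eq_trace_cfc hHq]
  exact tendsto_trace_cfc (.of_forall hH) hHq convexOn_neg_max_zero lipschitzWith_neg_max_zero h

theorem lamPos_le_of_memL (hσ : 0 < σ) (hp : IsPolyDeg n r p)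
    (hle : ∀ x ∈ ball (0 : En n) σ, lamPos n p x ≤ C * (lamNeg n p x + ‖gradient p x‖ ^ 2))
    (hq : memL n r p q) (x : En n) : lamPos n q x ≤ C * lamNeg n q x := by
  obtain ⟨hqdeg, -, y, τ, h, hy, hτ, -, hτ_lim, hh_lim, hlim⟩ := hq
  set f : ℕ → En n → ℝ := fun j => rescale (τ j) (h j) (y j) p
  have hfdeg : ∀ j, IsPolyDeg n r (f j) := fun j => isPolyDeg_rescale hp
  have hf : ∀ j, ContDiff ℝ 2 (f j) := fun j => (hfdeg j).contDiff
  have hpdm : ∀ α : Fin n → ℕ, 1 ≤ mdeg α → mdeg α ≤ r →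
      Tendsto (fun j => pdm n α (f j) 0) atTop (𝓝 (pdm n α q 0)) := fun α h1 hr => by
    simpa only [f, pdm_rescale, rescale, smul_zero, add_zero] using hlim α h1 hr
  have hhess := tendsto_hessM_of_tendsto_pdm_zero hfdeg hqdeg hpdm x
  have hgrad : Tendsto (fun j => ‖gradient (f j) x‖ ^ 2) atTop (𝓝 (‖gradient q x‖ ^ 2)) := by
    simp only [norm_gradient_sq_eq_sum_pd1]
    exact tendsto_finsetSum _ fun i _ =>
      (tendsto_pd1_of_tendsto_pdm_zero hfdeg hqdeg hpdm i x).pow 2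
  have hrhs : Tendsto (fun j => C * (lamNeg n (f j) x + (τ j)⁻¹ * ‖gradient (f j) x‖ ^ 2)) atTop
      (𝓝 (C * lamNeg n q x)) := by
    simpa only [zero_mul, add_zero, Function.comp_apply] using
      ((tendsto_lamNeg_of_tendsto_hessM hf hqdeg.contDiff hhess).add
        ((tendsto_inv_atTop_zero.comp hτ_lim).mul hgrad)).const_mul C
  have hpoint : Tendsto (fun j => y j + h j • x) atTop (𝓝 0) := by
    simpa using hy.add (hh_lim.smul_const x)
  refine le_of_tendsto_of_tendsto (tendsto_lamPos_of_tendsto_hessM hf hqdeg.contDiff hhess) hrhs ?_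
  filter_upwards [hpoint.eventually (ball_mem_nhds 0 hσ)] with j hj
  exact lamPos_rescale_le (hτ j) hp.contDiff (hle _ hj)

end LimitingPolynomials

/-- limiting polynomials have no local minimum. -/
theorem limiting_polynomial_no_local_min (n r : ℕ) (hr : 1 ≤ r)
    (p : En n → ℝ) (hp : IsPolyDeg n r p) (σ C : ℝ) (hσ : 0 < σ) (hC : 0 < C)
    (hloc : ∀ x : En n, ‖x‖ < σ →
      lamPos n p x ≤ C * (lamNeg n p x + ‖gradient p x‖ ^ 2)) :
    ∀ q : En n → ℝ, memL n r p q → q ≠ 0 → ∀ x : En n, ¬ IsLocalMin q x := by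
  intro q hq hq_ne x hmin
  have hell : ∀ z, lamPos n q z ≤ C * lamNeg n q z :=
    lamPos_le_of_memL hσ hp (fun z hz => hloc z (mem_ball_zero_iff.mp hz)) hq
  have hloc_const : q =ᶠ[𝓝 x] fun _ => q x :=
    eventuallyEq_const_of_isLocalMin_of_lamPos_le hC.le hq.1.contDiff.contDiffAt (.of_forall hell)
      hmin
  have hconst : q = fun _ => q x := hq.1.eq_const_of_eventuallyEq hloc_const
  have hqx : q x = 0 := (congrFun hconst 0).symm.trans hq.2.1
  exact hq_ne (hconst.trans (funext fun _ => hqx))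

end
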